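/- With high probability there do not exist a color i ∈ [q] and sets S ⊆ A, T ⊆ B with |S|, |T| ≥ βn such that more than γ_d·n/log n vertices of T have no c_i-neighbor in S, where γ_d = (4/α_i)·log(e/β). -/

import Mathlib

open MeasureTheory Filter Finset Asymptotics

/-- Discrete measurable structure on edge states: `none` = non-edge, `some i` = edge of color `cᵢ`. -/
instance (q : ℕ) : MeasurableSpace (Option (Fin q)) := ⊤

/-- Distribution of the state of a single pair: non-edge with probability `1-p`,
an edge of color `cᵢ` with probability `αᵢ·p`. -/
noncomputable def colorM (q : ℕ) (α : Fin q → ℝ) (p : ℝ) : Measure (Option (Fin q)) :=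
  ENNReal.ofReal (1 - p) • Measure.dirac none +
    ∑ i : Fin q, ENNReal.ofReal (α i * p) • Measure.dirac (some i)

/-- The randomly colored random bipartite graph on parts `A = B = Fin n`:
independently, each pair `(a,b)` is a non-edge with probability `1-p` and an
edge of color `cᵢ` with probability `αᵢ·p`.  A sample is a function
`f : Fin n × Fin n → Option (Fin q)`. -/
noncomputable def graphM (n q : ℕ) (α : Fin q → ℝ) (p : ℝ) :
    Measure (Fin n × Fin n → Option (Fin q)) :=
  Measure.pi fun _ => colorM q α p

/-!
The proof is a first-moment argument. If more than `γ n / log n` vertices have no `cᵢ`-neighbor in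
some `S` with `|S| ≥ βn`, then some `S' ⊆ S` and some set `T'` of such vertices, of sizes exactly
`s = ⌈βn⌉` and `t = ⌈γ n / log n⌉`, span no edge of color `cᵢ`. For a fixed pair `(S', T')` this has
probability `(1 - αᵢp) ^ (st) ≤ exp (-αᵢpst)`, and `αᵢpt ≥ 4 log (e/β)` because `p ≥ log n / n`.
As `t ≤ s` for large `n`, there are at most `(e/β) ^ (2s)` pairs, so the expected number of them
is at most `(β/e) ^ (2s) ≤ exp (-2s)`, which tends to `0`.
-/

instance (q : ℕ) : DiscreteMeasurableSpace (Option (Fin q)) := ⟨fun _ => trivial⟩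

section Counting

lemma choose_mul_pow_le_exp {x : ℝ} (hx : 0 ≤ x) (n k : ℕ) :
    n.choose k * x ^ k ≤ Real.exp (x * n) := by
  obtain hkn | hkn := le_or_gt k n
  · calc n.choose k * x ^ k = x ^ k * 1 ^ (n - k) * n.choose k := by ring
      _ ≤ ∑ m ∈ range (n + 1), x ^ m * 1 ^ (n - m) * n.choose m :=
        single_le_sum (f := fun m => x ^ m * 1 ^ (n - m) * (n.choose m : ℝ))
          (fun _ _ => by positivity) (mem_range.2 (Nat.lt_succ_of_le hkn))
      _ = (x + 1) ^ n := (add_pow x 1 n).symm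
      _ ≤ Real.exp x ^ n := by gcongr; exact Real.add_one_le_exp x
      _ = Real.exp (x * n) := by rw [mul_comm, Real.exp_nat_mul]
  · simpa [Nat.choose_eq_zero_of_lt hkn] using Real.exp_nonneg _

variable {β : ℝ} {m n s t : ℕ}

lemma choose_le_exp_one_div_pow (hβ : 0 < β) (hβ1 : β ≤ 1) (hs : β * n ≤ s) (hts : t ≤ s) :
    (n.choose t : ℝ) ≤ (Real.exp 1 / β) ^ s := by
  rw [div_pow, le_div_iff₀ (by positivity), ← Real.exp_nat_mul, mul_one]
  calc (n.choose t : ℝ) * β ^ s ≤ n.choose t * β ^ t := by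
        gcongr ?_ * ?_
        exact pow_le_pow_of_le_one hβ.le hβ1 hts
    _ ≤ Real.exp (β * n) := choose_mul_pow_le_exp hβ.le n t
    _ ≤ Real.exp s := Real.exp_le_exp.2 hs

lemma one_le_log_exp_one_div (hβ : 0 < β) (hβ1 : β ≤ 1) : 1 ≤ Real.log (Real.exp 1 / β) := by
  rw [Real.log_div (Real.exp_ne_zero 1) hβ.ne', Real.log_exp]
  linarith [Real.log_nonpos hβ.le hβ1]

lemma choose_mul_choose_mul_exp_neg_pow_le {x : ℝ} (hβ : 0 < β) (hβ1 : β ≤ 1) (hm : β * m ≤ s)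
    (hn : β * n ≤ s) (hts : t ≤ s) (hx : 4 * Real.log (Real.exp 1 / β) ≤ x * t) :
    m.choose s * n.choose t * Real.exp (-x) ^ (s * t) ≤ Real.exp (-(2 * s)) := by
  have hL := one_le_log_exp_one_div hβ hβ1
  have hpow : (Real.exp 1 / β) ^ s = Real.exp (s * Real.log (Real.exp 1 / β)) := by
    rw [Real.exp_nat_mul, Real.exp_log (by positivity)]
  set L := Real.log (Real.exp 1 / β)
  calc m.choose s * n.choose t * Real.exp (-x) ^ (s * t)
      ≤ (Real.exp 1 / β) ^ s * (Real.exp 1 / β) ^ s * Real.exp (-x) ^ (s * t) := by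
        gcongr
        · exact choose_le_exp_one_div_pow hβ hβ1 hm le_rfl
        · exact choose_le_exp_one_div_pow hβ hβ1 hn hts
    _ = Real.exp (s * (2 * L - x * t)) := by
        rw [hpow, ← Real.exp_nat_mul, ← Real.exp_add, ← Real.exp_add]
        push_cast
        ring_nf
    _ ≤ Real.exp (s * -2) := by gcongr; linarith
    _ = Real.exp (-(2 * s)) := by ring_nf

end Counting

section FirstMoment

variable {A B K : Type*} [Fintype B] [DecidableEq K]

/-- The vertices of `B` without a `c`-neighbor in `S ⊆ A`, for a coloring `f` of the pairs in
`A × B`. Non-edges are encoded by values of `f`, so any state other than `c` counts as not being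
`c`-adjacent. -/
def nonNeighbors (f : A × B → K) (c : K) (S : Finset A) : Finset B :=
  {b | ∀ a ∈ S, f (a, b) ≠ c}

lemma mem_nonNeighbors {f : A × B → K} {c : K} {S : Finset A} {b : B} :
    b ∈ nonNeighbors f c S ↔ ∀ a ∈ S, f (a, b) ≠ c := by
  simp [nonNeighbors]

variable [Fintype A]

lemma setOf_exists_card_nonNeighbors_subset (c : K) (s t : ℕ) :
    {f : A × B → K | ∃ S, s ≤ #S ∧ t ≤ #(nonNeighbors f c S)} ⊆
      ⋃ P ∈ powersetCard s (univ : Finset A) ×ˢ powersetCard t (univ : Finset B),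
        Set.pi (P.1 ×ˢ P.2 : Finset (A × B)) fun _ => {c}ᶜ := by
  rintro f ⟨S, hS, hN⟩
  obtain ⟨S', hS'S, hS'⟩ := exists_subset_card_eq hS
  obtain ⟨T', hT'N, hT'⟩ := exists_subset_card_eq hN
  refine Set.mem_biUnion (x := (S', T')) (by simp [hS', hT']) fun ⟨a, b⟩ hab => ?_
  obtain ⟨ha, hb⟩ := mem_product.1 (mem_coe.1 hab)
  exact mem_nonNeighbors.1 (hT'N hb) a (hS'S ha)

variable [MeasurableSpace K] {μ : Measure K} [IsProbabilityMeasure μ] {c : K}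

variable (μ c) in
lemma pi_exists_card_nonNeighbors_le (s t : ℕ) :
    Measure.pi (fun _ : A × B => μ) {f | ∃ S, s ≤ #S ∧ t ≤ #(nonNeighbors f c S)} ≤
      (Fintype.card A).choose s * (Fintype.card B).choose t * μ {c}ᶜ ^ (s * t) := by
  calc Measure.pi (fun _ : A × B => μ) {f | ∃ S, s ≤ #S ∧ t ≤ #(nonNeighbors f c S)}
      ≤ ∑ P ∈ powersetCard s (univ : Finset A) ×ˢ powersetCard t (univ : Finset B),
          Measure.pi (fun _ : A × B => μ)
            (Set.pi (P.1 ×ˢ P.2 : Finset (A × B)) fun _ => {c}ᶜ) :=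
        (measure_mono (setOf_exists_card_nonNeighbors_subset c s t)).trans
          (measure_biUnion_finset_le _ _)
    _ = ∑ _ ∈ powersetCard s (univ : Finset A) ×ˢ powersetCard t (univ : Finset B),
          μ {c}ᶜ ^ (s * t) := by
        refine sum_congr rfl fun P hP => ?_
        obtain ⟨hS, hT⟩ := mem_product.1 hP
        rw [Measure.pi_pi_finset, prod_const, card_product, (mem_powersetCard.1 hS).2,
          (mem_powersetCard.1 hT).2]
    _ = (Fintype.card A).choose s * (Fintype.card B).choose t * μ {c}ᶜ ^ (s * t) := by
        simp

lemma pi_exists_card_nonNeighbors_le_exp {β x : ℝ} {s t : ℕ} (hβ : 0 < β) (hβ1 : β ≤ 1)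
    (hμ : μ {c}ᶜ ≤ ENNReal.ofReal (Real.exp (-x))) (hA : β * Fintype.card A ≤ s)
    (hB : β * Fintype.card B ≤ s) (hts : t ≤ s)
    (hx : 4 * Real.log (Real.exp 1 / β) ≤ x * t) :
    Measure.pi (fun _ : A × B => μ) {f | ∃ S, s ≤ #S ∧ t ≤ #(nonNeighbors f c S)} ≤
      ENNReal.ofReal (Real.exp (-(2 * s))) := by
  calc Measure.pi (fun _ : A × B => μ) {f | ∃ S, s ≤ #S ∧ t ≤ #(nonNeighbors f c S)}
      ≤ (Fintype.card A).choose s * (Fintype.card B).choose t *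
          ENNReal.ofReal (Real.exp (-x)) ^ (s * t) :=
        (pi_exists_card_nonNeighbors_le μ c s t).trans (by gcongr)
    _ = ENNReal.ofReal ((Fintype.card A).choose s * (Fintype.card B).choose t *
          Real.exp (-x) ^ (s * t)) := by
        rw [ENNReal.ofReal_mul (by positivity), ENNReal.ofReal_mul (by positivity),
          ENNReal.ofReal_pow (Real.exp_nonneg _), ENNReal.ofReal_natCast, ENNReal.ofReal_natCast]
    _ ≤ ENNReal.ofReal (Real.exp (-(2 * s))) :=
        ENNReal.ofReal_le_ofReal (choose_mul_choose_mul_exp_neg_pow_le hβ hβ1 hA hB hts hx)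

end FirstMoment

section WithHighProbability

variable {ι : Type*} {l : Filter ι} {Ω : ι → Type*} [∀ i, MeasurableSpace (Ω i)]
  {μ : ∀ i, Measure (Ω i)} {s t : ∀ i, Set (Ω i)}

lemma tendsto_measure_one_of_compl (hμ : ∀ᶠ i in l, IsProbabilityMeasure (μ i))
    (hs : Tendsto (fun i => μ i (s i)ᶜ) l (nhds 0)) :
    Tendsto (fun i => μ i (s i)) l (nhds 1) := by
  have hlower : Tendsto (fun i => 1 - μ i (s i)ᶜ) l (nhds 1) := by
    simpa using ENNReal.Tendsto.sub tendsto_const_nhds hs (Or.inl ENNReal.one_ne_top)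
  refine tendsto_of_tendsto_of_tendsto_of_le_of_le' hlower tendsto_const_nhds ?_
    (hμ.mono fun _ _ => prob_le_one)
  filter_upwards [hμ] with i _
  rw [tsub_le_iff_right, ← measure_univ (μ := μ i), ← Set.union_compl_self (s i)]
  exact measure_union_le _ _

lemma tendsto_measure_one_mono (hμ : ∀ᶠ i in l, IsProbabilityMeasure (μ i))
    (hs : Tendsto (fun i => μ i (s i)) l (nhds 1)) (hst : ∀ i, s i ⊆ t i) :
    Tendsto (fun i => μ i (t i)) l (nhds 1) :=
  tendsto_of_tendsto_of_tendsto_of_le_of_le' hs tendsto_const_nhds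
    (.of_forall fun i => measure_mono (hst i)) (hμ.mono fun _ _ => prob_le_one)

end WithHighProbability

section Asymptotics

lemma tendsto_log_natCast_atTop : Tendsto (fun n : ℕ => Real.log n) atTop atTop :=
  Real.tendsto_log_atTop.comp tendsto_natCast_atTop_atTop

lemma eventually_ceil_mul_div_log_le (a : ℝ) {b : ℝ} (hb : 0 < b) :
    ∀ᶠ n : ℕ in atTop, ⌈a * n / Real.log n⌉₊ ≤ ⌈b * n⌉₊ := by
  filter_upwards [tendsto_log_natCast_atTop.eventually_ge_atTop (a / b),
    tendsto_log_natCast_atTop.eventually_gt_atTop 0] with n hab hlog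
  refine Nat.ceil_le_ceil ?_
  rw [div_le_iff₀ hlog]
  calc a * n ≤ Real.log n * b * n := by gcongr; exact (div_le_iff₀ hb).1 hab
    _ = b * n * Real.log n := by ring

lemma isLittleO_log_natCast : (fun n : ℕ => Real.log n) =o[atTop] fun n : ℕ => (n : ℝ) :=
  Real.isLittleO_log_id_atTop.comp_tendsto tendsto_natCast_atTop_atTop

lemma eventually_log_add_div_mem_Icc {w : ℕ → ℝ} (hw : ∀ᶠ n in atTop, 0 ≤ w n)
    (hwo : w =o[atTop] fun n => (n : ℝ)) :
    ∀ᶠ n : ℕ in atTop, (Real.log n + w n) / n ∈ Set.Icc (Real.log n / n) 1 := by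
  filter_upwards [hw, (isLittleO_log_natCast.add hwo).bound one_pos] with n hwn hle
  rw [one_mul, Real.norm_natCast] at hle
  exact ⟨by gcongr; linarith, div_le_one_of_le₀ ((le_abs_self _).trans hle) n.cast_nonneg⟩

lemma mem_Icc_zero_one_of_mem_Icc_log_div {n : ℕ} {p : ℝ}
    (hp : p ∈ Set.Icc (Real.log n / n) 1) : p ∈ Set.Icc (0 : ℝ) 1 :=
  Set.Icc_subset_Icc_left (div_nonneg (Real.log_natCast_nonneg n) n.cast_nonneg) hp

end Asymptotics

section RandomColoring

variable {q : ℕ} {α : Fin q → ℝ}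

lemma isProbabilityMeasure_colorM (hα : ∀ i, 0 ≤ α i) (hsum : ∑ i, α i = 1) {p : ℝ}
    (hp : p ∈ Set.Icc 0 1) : IsProbabilityMeasure (colorM q α p) where
  measure_univ := by
    simp only [colorM, Measure.coe_add, Measure.coe_smul, Pi.add_apply, Pi.smul_apply,
      measure_univ, Measure.coe_finsetSum, Finset.sum_apply, smul_eq_mul, mul_one]
    rw [← ENNReal.ofReal_sum_of_nonneg fun i _ => mul_nonneg (hα i) hp.1, ← sum_mul, hsum, one_mul,
      ← ENNReal.ofReal_add (sub_nonneg.2 hp.2) hp.1, sub_add_cancel, ENNReal.ofReal_one]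

lemma isProbabilityMeasure_graphM (n : ℕ) (hα : ∀ i, 0 ≤ α i) (hsum : ∑ i, α i = 1) {p : ℝ}
    (hp : p ∈ Set.Icc 0 1) : IsProbabilityMeasure (graphM n q α p) := by
  have := isProbabilityMeasure_colorM hα hsum hp
  unfold graphM
  infer_instance

lemma colorM_singleton_some (p : ℝ) (i : Fin q) :
    colorM q α p {some i} = ENNReal.ofReal (α i * p) := by
  simp [colorM, Set.indicator_apply]

lemma colorM_compl_singleton_some_le (hα : ∀ i, 0 ≤ α i) (hsum : ∑ i, α i = 1) {p : ℝ}
    (hp : p ∈ Set.Icc 0 1) (i : Fin q) :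
    colorM q α p {some i}ᶜ ≤ ENNReal.ofReal (Real.exp (-(α i * p))) := by
  have := isProbabilityMeasure_colorM hα hsum hp
  rw [prob_compl_eq_one_sub (MeasurableSet.singleton _), colorM_singleton_some,
    ← ENNReal.ofReal_one, ← ENNReal.ofReal_sub 1 (mul_nonneg (hα i) hp.1)]
  exact ENNReal.ofReal_le_ofReal (Real.one_sub_le_exp_neg _)

variable {β : ℝ} {p : ℕ → ℝ}

lemma eventually_isProbabilityMeasure_graphM (hα : ∀ i, 0 ≤ α i) (hsum : ∑ i, α i = 1)
    (hp : ∀ᶠ n : ℕ in atTop, p n ∈ Set.Icc (Real.log n / n) 1) :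
    ∀ᶠ n in atTop, IsProbabilityMeasure (graphM n q α (p n)) :=
  hp.mono fun n hpn =>
    isProbabilityMeasure_graphM n hα hsum (mem_Icc_zero_one_of_mem_Icc_log_div hpn)

lemma tendsto_graphM_exists_card_nonNeighbors (hα : ∀ i, 0 ≤ α i) (hsum : ∑ i, α i = 1)
    (hβ : 0 < β) (hβ1 : β ≤ 1) (hp : ∀ᶠ n : ℕ in atTop, p n ∈ Set.Icc (Real.log n / n) 1)
    {i : Fin q} (hi : 0 < α i) :
    Tendsto (fun n => graphM n q α (p n)
      {f | ∃ S : Finset (Fin n), β * n ≤ (#S : ℝ) ∧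
        4 / α i * Real.log (Real.exp 1 / β) * n / Real.log n <
          (#(nonNeighbors f (some i) S) : ℝ)}) atTop (nhds 0) := by
  set γ := 4 / α i * Real.log (Real.exp 1 / β) with hγ
  have hbound : Tendsto (fun n : ℕ => ENNReal.ofReal (Real.exp (-(2 * ⌈β * n⌉₊)))) atTop
      (nhds 0) := by
    have hceil : Tendsto (fun n : ℕ => (2 * ⌈β * n⌉₊ : ℝ)) atTop atTop :=
      (tendsto_natCast_atTop_atTop.comp (tendsto_nat_ceil_atTop.comp
        (tendsto_natCast_atTop_atTop.const_mul_atTop hβ))).const_mul_atTop two_pos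
    simpa using ENNReal.tendsto_ofReal (Real.tendsto_exp_neg_atTop_nhds_zero.comp hceil)
  refine tendsto_of_tendsto_of_tendsto_of_le_of_le' tendsto_const_nhds hbound
    (.of_forall fun _ => zero_le) ?_
  filter_upwards [hp, eventually_ceil_mul_div_log_le γ hβ, eventually_gt_atTop 0,
    tendsto_log_natCast_atTop.eventually_gt_atTop 0] with n hpn hts hn hlog
  have hp01 := mem_Icc_zero_one_of_mem_Icc_log_div hpn
  have := isProbabilityMeasure_colorM hα hsum hp01
  have hexponent : 4 * Real.log (Real.exp 1 / β) ≤ α i * p n * ⌈γ * n / Real.log n⌉₊ := by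
    calc 4 * Real.log (Real.exp 1 / β)
        = α i * (Real.log n / n) * (γ * n / Real.log n) := by rw [hγ]; field_simp
      _ ≤ α i * (Real.log n / n) * ⌈γ * n / Real.log n⌉₊ := by gcongr; exact Nat.le_ceil _
      _ ≤ α i * p n * ⌈γ * n / Real.log n⌉₊ := by gcongr; exact hpn.1
  have hcard : β * Fintype.card (Fin n) ≤ ⌈β * n⌉₊ := by simpa using Nat.le_ceil (β * n)
  refine (measure_mono ?_).trans (pi_exists_card_nonNeighbors_le_exp hβ hβ1
    (colorM_compl_singleton_some_le hα hsum hp01 i) hcard hcard hts hexponent)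
  exact fun f ⟨S, hS, hN⟩ => ⟨S, Nat.ceil_le.2 hS, Nat.ceil_le.2 hN.le⟩

theorem lemma_d_general (hα : ∀ i, 0 < α i) (hsum : ∑ i, α i = 1) (hβ : 0 < β) (hβ1 : β ≤ 1)
    (hp : ∀ᶠ n : ℕ in atTop, p n ∈ Set.Icc (Real.log n / n) 1) :
    Tendsto (fun n => graphM n q α (p n)
      {f | ∀ (i : Fin q) (S : Finset (Fin n)), β * n ≤ (#S : ℝ) →
        (#(nonNeighbors f (some i) S) : ℝ) ≤
          4 / α i * Real.log (Real.exp 1 / β) * n / Real.log n}) atTop (nhds 1) := by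
  refine tendsto_measure_one_of_compl
    (eventually_isProbabilityMeasure_graphM (fun i => (hα i).le) hsum hp) ?_
  have hsum_zero := tendsto_finsetSum univ fun i _ =>
    tendsto_graphM_exists_card_nonNeighbors (fun j => (hα j).le) hsum hβ hβ1 hp (hα i)
  rw [sum_const_zero] at hsum_zero
  refine tendsto_of_tendsto_of_tendsto_of_le_of_le tendsto_const_nhds hsum_zero
    (fun _ => zero_le) fun n => (measure_mono fun f hf => ?_).trans (measure_iUnion_fintype_le _ _)
  simpa using hf

end RandomColoring

/-- Lemma 2(d): with `γ_d = (4/αᵢ) log(e/β)`, w.h.p. there are no color `i` and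
sets `S ⊆ A`, `T ⊆ B` with `|S|, |T| ≥ βn` such that more than `γ_d n/log n` vertices of `T`
have no `cᵢ`-neighbor in `S`. -/
theorem lemma_d (q : ℕ) (hq : 1 ≤ q) (α : Fin q → ℝ)
    (hα : ∀ i, 0 < α i) (hsum : ∑ i, α i = 1)
    (β : ℝ) (hβ : 0 < β) (hβq : β < 1 / q)
    (w : ℕ → ℝ) (hw : Tendsto w atTop atTop)
    (hwo : w =o[atTop] fun n => Real.log n) :
    Tendsto (fun n =>
      graphM n q α ((Real.log n + w n) / n)
        {f | ¬ ∃ (i : Fin q) (S T : Finset (Fin n)),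
          β * n ≤ (S.card : ℝ) ∧ β * n ≤ (T.card : ℝ) ∧
          4 / α i * Real.log (Real.exp 1 / β) * n / Real.log n <
            ((T.filter fun b => ∀ a ∈ S, f (a, b) ≠ some i).card : ℝ)})
      atTop (nhds 1) := by
  have hβ1 : β ≤ 1 := hβq.le.trans (div_le_one_of_le₀ (by exact_mod_cast hq) q.cast_nonneg)
  have hp := eventually_log_add_div_mem_Icc (hw.eventually_ge_atTop 0)
    (hwo.trans isLittleO_log_natCast)
  refine tendsto_measure_one_mono
    (eventually_isProbabilityMeasure_graphM (fun i => (hα i).le) hsum hp)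
    (lemma_d_general hα hsum hβ hβ1 hp) fun n f hf => ?_
  rintro ⟨i, S, T, hS, -, hT⟩
  have hcard : #{b ∈ T | ∀ a ∈ S, f (a, b) ≠ some i} ≤ #(nonNeighbors f (some i) S) :=
    card_le_card fun b hb => mem_nonNeighbors.2 (mem_filter.1 hb).2
  exact (hT.trans_le (Nat.cast_le.2 hcard)).not_ge (hf i S hS)
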